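/- arXiv:0905.1863 — 3 statements merged into one kernel-verified Lean document; each statement's English description precedes it below -/
import Mathlib

section
/- Let G satisfy Assumption F (with G in place of F) together with the strict monotonicity condition: at every point, G_r + G_p·w + wᵀ G_γ w ≥ 0 for all w ∈ ℝ^d. Set β := sup|G_r|. Then for every a₀, b₀ ≥ 0, the function δ(t) := e^{β(T−t)}(a₀ + b₀(T−t)) satisfies: for all bounded measurable functions φ ≤ ψ on [0,T]×ℝ^d, all h > 0 and all (t,x) with t + h ≤ T, T^G_h[φ + δ](t,x) ≤ T^G_h[ψ](t,x) + δ(t) − h·b₀, where (φ + δ)(s,y) := φ(s,y) + δ(s). -/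
/-!
For fixed `(t, x)`, the one-step operator is `ψ ↦ Φ (E[ψ(X̂) Z])`, where `Z = (1, H₁, H₂)` and
`Φ (r, p, γ) = r + h G(t, x, r, p, γ)`. If every differential of `Φ` is nonnegative on `Z`, then by
the mean value theorem an inequality `X ≤ Y + δ` of random variables yields
`Φ (E[X Z]) - Φ (E[Y Z]) = E[(X - Y) Φ'(Z)] ≤ δ Φ'(E[Z])`, with `Φ'` taken at some intermediate
point.

Here `H₂ = v vᵀ - a⁻¹ / h` with `v = H₁`, so that
`Φ'(Z) = (1 - Tr(a⁻¹ G_γ)) + h (G_r + G_p · v + vᵀ G_γ v) ≥ 0`, while `E[Z] = (1, 0, 0)` gives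
`Φ'(E[Z]) = 1 + h G_r ≤ 1 + β h ≤ e^{β h}`. The factor `e^{β (T - t)}` in `δ` absorbs this growth
over one step, and the decrease of `a₀ + b₀ (T - t)` leaves the gain `h b₀`.
-/

open MeasureTheory ProbabilityTheory Matrix Real Set Function

noncomputable section

attribute [local instance] Matrix.normedAddCommGroup Matrix.normedSpace

abbrev Vec (d : ℕ) := Fin d → ℝ
abbrev Mat (d : ℕ) := Matrix (Fin d) (Fin d) ℝ

/-- Law of the Gaussian vector `W_h` in `ℝ^d`, centered with covariance `h · I_d`. -/
def gaussVec (d : ℕ) (h : ℝ) : Measure (Vec d) :=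
  Measure.pi fun _ => gaussianReal 0 h.toNNReal

/-- One step Euler scheme `X̂_h^{t,x} = x + μ(t,x) h + σ(t,x) W_h`. -/
def euler {d : ℕ} (μ : ℝ → Vec d → Vec d) (σ : ℝ → Vec d → Mat d)
    (h t : ℝ) (x w : Vec d) : Vec d :=
  x + h • μ t x + (σ t x).mulVec w

/-- Weight `H_1^h(t,x) = (σ(t,x)ᵀ)⁻¹ W_h / h`. -/
def H1w {d : ℕ} (σ : ℝ → Vec d → Mat d) (h t : ℝ) (x w : Vec d) : Vec d :=
  (1 / h) • ((σ t x)ᵀ⁻¹.mulVec w)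

/-- Weight `H_2^h(t,x) = (σ(t,x)ᵀ)⁻¹ (W_h W_hᵀ − h I_d) σ(t,x)⁻¹ / h²`. -/
def H2w {d : ℕ} (σ : ℝ → Vec d → Mat d) (h t : ℝ) (x w : Vec d) : Mat d :=
  (1 / h ^ 2) • ((σ t x)ᵀ⁻¹ * (vecMulVec w w - h • (1 : Mat d)) * (σ t x)⁻¹)

/-- One-step operator acting on the next-time function `ψ`. -/
def step {d : ℕ} (F : ℝ → Vec d → ℝ → Vec d → Mat d → ℝ)
    (μ : ℝ → Vec d → Vec d) (σ : ℝ → Vec d → Mat d)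
    (h t : ℝ) (ψ : Vec d → ℝ) (x : Vec d) : ℝ :=
  (∫ w, ψ (euler μ σ h t x w) ∂gaussVec d h)
    + h * F t x (∫ w, ψ (euler μ σ h t x w) ∂gaussVec d h)
        (fun i => ∫ w, ψ (euler μ σ h t x w) * H1w σ h t x w i ∂gaussVec d h)
        (Matrix.of fun i j => ∫ w, ψ (euler μ σ h t x w) * H2w σ h t x w i j ∂gaussVec d h)

/-- The operator `T_h[ψ](t,x)`. -/
def Th {d : ℕ} (F : ℝ → Vec d → ℝ → Vec d → Mat d → ℝ)
    (μ : ℝ → Vec d → Vec d) (σ : ℝ → Vec d → Mat d)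
    (ψ : ℝ → Vec d → ℝ) (h t : ℝ) (x : Vec d) : ℝ :=
  step F μ σ h t (ψ (t + h)) x

/-- Assumption F of the paper, with explicit partial derivatives `Fr, Fp, Fγ` of `F`
in the variables `(r,p,γ)`. -/
structure AssumptionF (d : ℕ) (σ : ℝ → Vec d → Mat d)
    (F : ℝ → Vec d → ℝ → Vec d → Mat d → ℝ)
    (Fr : ℝ → Vec d → ℝ → Vec d → Mat d → ℝ)
    (Fp : ℝ → Vec d → ℝ → Vec d → Mat d → Vec d)
    (Fγ : ℝ → Vec d → ℝ → Vec d → Mat d → Mat d) : Prop where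
  lipschitz : ∃ L : ℝ, 0 ≤ L ∧ ∀ t x x' r r' p p' γ γ',
    |F t x r p γ - F t x' r' p' γ'| ≤ L * (‖x - x'‖ + |r - r'| + ‖p - p'‖ + ‖γ - γ'‖)
  bound_at_zero : ∃ C : ℝ, ∀ t x, |F t x 0 0 0| ≤ C
  differentiable : ∀ t x r p γ, DifferentiableAt ℝ
    (fun q : ℝ × Vec d × Mat d => F t x q.1 q.2.1 q.2.2) (r, p, γ)
  deriv_eq : ∀ t x r p γ (dq : ℝ × Vec d × Mat d),
    fderiv ℝ (fun q : ℝ × Vec d × Mat d => F t x q.1 q.2.1 q.2.2) (r, p, γ) dq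
      = Fr t x r p γ * dq.1 + Fp t x r p γ ⬝ᵥ dq.2.1
        + ∑ i, ∑ j, Fγ t x r p γ i j * dq.2.2 i j
  psd : ∀ t x r p γ, (Fγ t x r p γ).PosSemidef
  trace_le_one : ∀ t x r p γ, ((σ t x * (σ t x)ᵀ)⁻¹ * Fγ t x r p γ).trace ≤ 1
  lower_bound : ∃ K : ℝ, 0 ≤ K ∧ ∀ t x r p γ (w : Vec d),
    Fp t x r p γ ⬝ᵥ w + w ⬝ᵥ (Fγ t x r p γ).mulVec w ≥ -K

/-- The topology of the sup norm on matrices, for the integration of matrices. It takes precedence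
over the entrywise topology, with which the lemmas on integrals in normed spaces do not unify. -/
abbrev matrixNormTopology {m n : Type*} [Fintype m] [Fintype n] : TopologicalSpace (Matrix m n ℝ) :=
  UniformSpace.toTopologicalSpace (self := PseudoMetricSpace.toUniformSpace)

attribute [local instance] matrixNormTopology

section Comparison

variable {Ω E : Type*} {mΩ : MeasurableSpace Ω} {P : Measure Ω}
  [NormedAddCommGroup E] [NormedSpace ℝ E]

lemma integrable_sub_smul {X Y : Ω → ℝ} {Z : Ω → E}
    (hX : Integrable (fun ω => X ω • Z ω) P) (hY : Integrable (fun ω => Y ω • Z ω) P) :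
    Integrable (fun ω => (X ω - Y ω) • Z ω) P := by
  simp only [sub_smul]
  exact hX.sub hY

variable [CompleteSpace E]

lemma exists_sub_eq_integral_mul_fderiv {Φ : E → ℝ} {Φ' : E → E →L[ℝ] ℝ}
    (hΦ : ∀ z, HasFDerivAt Φ (Φ' z) z) {X Y : Ω → ℝ} {Z : Ω → E}
    (hX : Integrable (fun ω => X ω • Z ω) P) (hY : Integrable (fun ω => Y ω • Z ω) P) :
    ∃ z, Φ (∫ ω, X ω • Z ω ∂P) - Φ (∫ ω, Y ω • Z ω ∂P)
      = ∫ ω, (X ω - Y ω) * Φ' z (Z ω) ∂P := by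
  obtain ⟨z, -, hz⟩ := domain_mvt (fun z _ => (hΦ z).hasFDerivWithinAt) convex_univ
    (mem_univ (∫ ω, Y ω • Z ω ∂P)) (mem_univ (∫ ω, X ω • Z ω ∂P))
  refine ⟨z, ?_⟩
  rw [hz, ← integral_sub hX hY]
  simp only [← sub_smul, ← smul_eq_mul, ← map_smul]
  exact ((Φ' z).integral_comp_comm (integrable_sub_smul hX hY)).symm

theorem apply_integral_smul_le_of_fderiv_nonneg {Φ : E → ℝ} {Φ' : E → E →L[ℝ] ℝ}
    (hΦ : ∀ z, HasFDerivAt Φ (Φ' z) z) {X Y : Ω → ℝ} {Z : Ω → E} (hZ : Integrable Z P)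
    (hX : Integrable (fun ω => X ω • Z ω) P) (hY : Integrable (fun ω => Y ω • Z ω) P)
    (hpos : ∀ z, ∀ᵐ ω ∂P, 0 ≤ Φ' z (Z ω)) {c : ℝ} (hc : ∀ z, Φ' z (∫ ω, Z ω ∂P) ≤ c)
    {δ : ℝ} (hδ : 0 ≤ δ) (hXY : ∀ᵐ ω ∂P, X ω ≤ Y ω + δ) :
    Φ (∫ ω, X ω • Z ω ∂P) ≤ Φ (∫ ω, Y ω • Z ω ∂P) + δ * c := by
  obtain ⟨z, hz⟩ := exists_sub_eq_integral_mul_fderiv hΦ hX hY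
  have hXYint : Integrable (fun ω => (X ω - Y ω) * Φ' z (Z ω)) P := by
    simpa only [map_smul, smul_eq_mul] using
      (Φ' z).integrable_comp (integrable_sub_smul hX hY)
  have hle : ∫ ω, (X ω - Y ω) * Φ' z (Z ω) ∂P ≤ δ * c :=
    calc ∫ ω, (X ω - Y ω) * Φ' z (Z ω) ∂P
        ≤ ∫ ω, δ * Φ' z (Z ω) ∂P := by
          refine integral_mono_ae hXYint (((Φ' z).integrable_comp hZ).const_mul δ) ?_
          filter_upwards [hpos z, hXY] with ω hω hXYω
          exact mul_le_mul_of_nonneg_right (by linarith) hω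
      _ = δ * Φ' z (∫ ω, Z ω ∂P) := by
          rw [integral_const_mul, (Φ' z).integral_comp_comm hZ]
      _ ≤ δ * c := mul_le_mul_of_nonneg_left (hc z) hδ
  linarith

end Comparison

section MatrixIntegrals

variable {Ω m n : Type*} {mΩ : MeasurableSpace Ω} {P : Measure Ω} [Fintype m] [Fintype n]

/-- The map `M ↦ A M B` on matrices, as a continuous linear map: it commutes with integrals. -/
def sandwichCLM (A : Matrix m m ℝ) (B : Matrix n n ℝ) : Matrix m n ℝ →L[ℝ] Matrix m n ℝ :=
  LinearMap.toContinuousLinearMap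
    { toFun := fun M => A * M * B
      map_add' := fun M N => by rw [Matrix.mul_add, Matrix.add_mul]
      map_smul' := fun c M => by simp only [Matrix.mul_smul, Matrix.smul_mul, RingHom.id_apply] }

lemma integrable_mulVec (A : Matrix m n ℝ) {f : Ω → n → ℝ} (hf : Integrable f P) :
    Integrable (fun ω => A *ᵥ f ω) P :=
  A.mulVecLin.toContinuousLinearMap.integrable_comp hf

lemma integral_mulVec (A : Matrix m n ℝ) {f : Ω → n → ℝ} (hf : Integrable f P) :
    ∫ ω, A *ᵥ f ω ∂P = A *ᵥ ∫ ω, f ω ∂P :=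
  A.mulVecLin.toContinuousLinearMap.integral_comp_comm hf

lemma integrable_mul_mul (A : Matrix m m ℝ) (B : Matrix n n ℝ) {M : Ω → Matrix m n ℝ}
    (hM : Integrable M P) : Integrable (fun ω => A * M ω * B) P :=
  (sandwichCLM A B).integrable_comp hM

lemma integral_mul_mul (A : Matrix m m ℝ) (B : Matrix n n ℝ) {M : Ω → Matrix m n ℝ}
    (hM : Integrable M P) : ∫ ω, A * M ω * B ∂P = A * (∫ ω, M ω ∂P) * B :=
  (sandwichCLM A B).integral_comp_comm hM

lemma integrable_matrix_iff {M : Ω → Matrix m n ℝ} :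
    Integrable M P ↔ ∀ i j, Integrable (fun ω => M ω i j) P :=
  integrable_pi_iff.trans (forall_congr' fun _ => integrable_pi_iff)

lemma integral_matrix_apply {M : Ω → Matrix m n ℝ} (hM : Integrable M P) (i : m) (j : n) :
    (∫ ω, M ω ∂P) i j = ∫ ω, M ω i j ∂P := by
  have hrow := integrable_pi_iff.1 hM
  exact (congrFun (eval_integral hrow i) j).trans (eval_integral (integrable_pi_iff.1 (hrow i)) j)

end MatrixIntegrals

section GaussianMoments

lemma integral_eval_mul_eval_pi {ι : Type*} [Fintype ι] [DecidableEq ι] {ν : ι → Measure ℝ}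
    [∀ i, IsProbabilityMeasure (ν i)] (hν : ∀ i, ∫ y, y ∂ν i = 0) (i j : ι) :
    ∫ w, w i * w j ∂Measure.pi ν = diagonal (fun k => Var[id; ν k]) i j := by
  rcases eq_or_ne i j with rfl | hij
  · rw [diagonal_apply_eq, variance_of_integral_eq_zero aemeasurable_id (hν i),
      ← integral_comp_eval (μ := ν) (i := i) (f := fun y : ℝ => id y ^ 2) (by fun_prop)]
    simp only [id_eq, sq]
  · have hindep : IndepFun (fun w : ι → ℝ => w i) (fun w => w j) (Measure.pi ν) :=
      (iIndepFun_pi (X := fun _ y => y) fun _ => aemeasurable_id).indepFun hij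
    rw [diagonal_apply_ne _ hij, hindep.integral_fun_mul_eq_mul_integral
      (measurable_pi_apply i).aestronglyMeasurable (measurable_pi_apply j).aestronglyMeasurable,
      integral_eval, hν, zero_mul]

variable (d : ℕ) (h : ℝ)

instance : IsProbabilityMeasure (gaussVec d h) := by
  unfold gaussVec
  infer_instance

lemma memLp_eval_gaussVec (i : Fin d) : MemLp (fun w => w i) 2 (gaussVec d h) :=
  (memLp_id_gaussianReal 2).comp_measurePreserving
    (measurePreserving_eval (fun _ => gaussianReal 0 h.toNNReal) i)

lemma integrable_id_gaussVec : Integrable (fun w => w) (gaussVec d h) :=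
  integrable_pi_iff.2 fun i => (memLp_eval_gaussVec d h i).integrable one_le_two

lemma integral_id_gaussVec : ∫ w, w ∂gaussVec d h = 0 := by
  ext i
  rw [eval_integral (integrable_pi_iff.1 (integrable_id_gaussVec d h)), gaussVec, integral_eval,
    integral_id_gaussianReal, Pi.zero_apply]

lemma integrable_vecMulVec_gaussVec :
    Integrable (fun w => vecMulVec w w) (gaussVec d h) :=
  integrable_matrix_iff.2 fun i j =>
    (memLp_eval_gaussVec d h i).integrable_mul (memLp_eval_gaussVec d h j)

variable {h} in
lemma integral_vecMulVec_gaussVec (hh : 0 ≤ h) :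
    ∫ w, vecMulVec w w ∂gaussVec d h = h • (1 : Mat d) := by
  ext i j
  rw [integral_matrix_apply (integrable_vecMulVec_gaussVec d h)]
  simp only [vecMulVec_apply, gaussVec]
  rw [integral_eval_mul_eval_pi fun _ => integral_id_gaussianReal]
  simp only [variance_id_gaussianReal, Real.coe_toNNReal h hh, smul_one_eq_diagonal]

end GaussianMoments

section Weights

variable {d : ℕ} (σ : ℝ → Vec d → Mat d) {h : ℝ} (t : ℝ) (x : Vec d)

section Moments

variable {ν : Measure (Vec d)}

lemma integrable_H1w (hν : Integrable (fun w => w) ν) : Integrable (H1w σ h t x) ν :=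
  (integrable_mulVec (σ t x)ᵀ⁻¹ hν).smul (1 / h)

lemma integral_H1w (hν : Integrable (fun w => w) ν) (hmean : ∫ w, w ∂ν = 0) :
    ∫ w, H1w σ h t x w ∂ν = 0 := by
  simp only [H1w]
  rw [integral_smul, integral_mulVec _ hν, hmean, mulVec_zero, smul_zero]

lemma integrable_H2w [IsFiniteMeasure ν] (hν : Integrable (fun w => vecMulVec w w) ν) :
    Integrable (H2w σ h t x) ν :=
  (integrable_mul_mul (σ t x)ᵀ⁻¹ (σ t x)⁻¹ (hν.sub (integrable_const (h • 1)))).smul (1 / h ^ 2)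

lemma integral_H2w [IsProbabilityMeasure ν] (hν : Integrable (fun w => vecMulVec w w) ν)
    (hcov : ∫ w, vecMulVec w w ∂ν = h • (1 : Mat d)) :
    ∫ w, H2w σ h t x w ∂ν = 0 := by
  simp only [H2w]
  have hcentered : Integrable (fun w => vecMulVec w w - h • (1 : Mat d)) ν :=
    hν.sub (integrable_const _)
  rw [integral_smul, integral_mul_mul _ _ hcentered, integral_sub hν (integrable_const _), hcov,
    integral_const, probReal_univ, one_smul, sub_self, Matrix.mul_zero, Matrix.zero_mul, smul_zero]

end Moments

lemma H2w_eq_vecMulVec_H1w_sub (hh : h ≠ 0) (w : Vec d) :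
    H2w σ h t x w
      = vecMulVec (H1w σ h t x w) (H1w σ h t x w) - (1 / h) • (σ t x * (σ t x)ᵀ)⁻¹ := by
  have hsq : (σ t x)ᵀ⁻¹ * vecMulVec w w * (σ t x)⁻¹
      = vecMulVec ((σ t x)ᵀ⁻¹ *ᵥ w) ((σ t x)ᵀ⁻¹ *ᵥ w) := by
    rw [mul_vecMulVec, vecMulVec_mul, ← transpose_nonsing_inv, mulVec_transpose]
  have hscal : 1 / h ^ 2 * h = 1 / h := by field_simp
  rw [H2w, H1w, Matrix.mul_sub, Matrix.sub_mul, hsq, Matrix.mul_inv_rev, vecMulVec_smul,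
    smul_vecMulVec, smul_smul, smul_sub, Matrix.mul_smul, Matrix.smul_mul, smul_smul,
    Matrix.mul_one, hscal]
  congr 2
  ring

/-- The weight `Z = (1, H₁, H₂)`: the arguments `(r, p, γ)` at which the one-step operator evaluates
the nonlinearity are the components of `E[ψ(X̂) Z]`. -/
def weights (h : ℝ) (w : Vec d) : ℝ × Vec d × Mat d :=
  (1, H1w σ h t x w, H2w σ h t x w)

lemma integrable_weights : Integrable (weights σ t x h) (gaussVec d h) :=
  (integrable_const 1).prodMk ((integrable_H1w σ t x (integrable_id_gaussVec d h)).prodMk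
    (integrable_H2w σ t x (integrable_vecMulVec_gaussVec d h)))

lemma integral_weights (hh : 0 ≤ h) : ∫ w, weights σ t x h w ∂gaussVec d h = (1, 0, 0) := by
  have h₁ := integrable_H1w (h := h) σ t x (integrable_id_gaussVec d h)
  have h₂ := integrable_H2w (h := h) σ t x (integrable_vecMulVec_gaussVec d h)
  simp only [weights]
  rw [integral_pair (integrable_const 1) (h₁.prodMk h₂), integral_pair h₁ h₂,
    integral_H1w σ t x (integrable_id_gaussVec d h) (integral_id_gaussVec d h),
    integral_H2w σ t x (integrable_vecMulVec_gaussVec d h) (integral_vecMulVec_gaussVec d hh),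
    integral_const, probReal_univ, one_smul]

end Weights

section Linearization

variable {d : ℕ}

/-- The linear form `(ρ, u, M) ↦ r ρ + p · u + ∑ᵢⱼ Γᵢⱼ Mᵢⱼ` on the arguments of the nonlinearity,
i.e. the differential of a function with partial derivatives `r`, `p`, `Γ`. -/
def gradientForm (r : ℝ) (p : Vec d) (Γ : Mat d) : ℝ × Vec d × Mat d →L[ℝ] ℝ :=
  LinearMap.toContinuousLinearMap
    { toFun := fun q => r * q.1 + p ⬝ᵥ q.2.1 + ∑ i, ∑ j, Γ i j * q.2.2 i j
      map_add' := fun q q' => by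
        simp only [Prod.fst_add, Prod.snd_add, dotProduct_add, Matrix.add_apply, mul_add,
          Finset.sum_add_distrib]
        ring
      map_smul' := fun c q => by
        simp only [Prod.smul_fst, Prod.smul_snd, dotProduct_smul, Matrix.smul_apply, smul_eq_mul,
          mul_left_comm _ c, ← Finset.mul_sum, RingHom.id_apply]
        ring }

lemma gradientForm_apply (r : ℝ) (p : Vec d) (Γ : Mat d) (q : ℝ × Vec d × Mat d) :
    gradientForm r p Γ q = r * q.1 + p ⬝ᵥ q.2.1 + ∑ i, ∑ j, Γ i j * q.2.2 i j :=
  rfl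

lemma AssumptionF.hasFDerivAt {σ : ℝ → Vec d → Mat d}
    {F Fr : ℝ → Vec d → ℝ → Vec d → Mat d → ℝ} {Fp : ℝ → Vec d → ℝ → Vec d → Mat d → Vec d}
    {Fγ : ℝ → Vec d → ℝ → Vec d → Mat d → Mat d} (hF : AssumptionF d σ F Fr Fp Fγ)
    (t : ℝ) (x : Vec d) (r : ℝ) (p : Vec d) (γ : Mat d) :
    HasFDerivAt (fun q : ℝ × Vec d × Mat d => F t x q.1 q.2.1 q.2.2)
      (gradientForm (Fr t x r p γ) (Fp t x r p γ) (Fγ t x r p γ)) (r, p, γ) :=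
  (hF.differentiable t x r p γ).hasFDerivAt.congr_fderiv
    (ContinuousLinearMap.ext (hF.deriv_eq t x r p γ))

lemma sum_sum_mul_vecMulVec (Γ : Mat d) (v : Vec d) :
    ∑ i, ∑ j, Γ i j * vecMulVec v v i j = v ⬝ᵥ Γ *ᵥ v := by
  simp only [dotProduct, mulVec, vecMulVec_apply, Finset.mul_sum]
  exact Finset.sum_congr rfl fun i _ => Finset.sum_congr rfl fun j _ => by ring

variable (σ : ℝ → Vec d → Mat d) (t : ℝ) (x : Vec d) {h : ℝ}

lemma sum_sum_mul_H2w (hh : h ≠ 0) (Γ : Mat d) (w : Vec d) :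
    ∑ i, ∑ j, Γ i j * H2w σ h t x w i j
      = H1w σ h t x w ⬝ᵥ Γ *ᵥ H1w σ h t x w
        - (1 / h) * ((σ t x * (σ t x)ᵀ)⁻¹ * Γ).trace := by
  have hsymm : ((σ t x * (σ t x)ᵀ)⁻¹)ᵀ = (σ t x * (σ t x)ᵀ)⁻¹ := by
    rw [transpose_nonsing_inv, transpose_mul, transpose_transpose]
  have htrace : ∑ i, ∑ j, Γ i j * (σ t x * (σ t x)ᵀ)⁻¹ i j
      = ((σ t x * (σ t x)ᵀ)⁻¹ * Γ).trace := by
    rw [trace_mul_comm, ← hsymm, ← sum_hadamard_eq, hsymm]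
    rfl
  simp only [H2w_eq_vecMulVec_H1w_sub σ t x hh, Matrix.sub_apply, Matrix.smul_apply, smul_eq_mul,
    mul_sub, Finset.sum_sub_distrib, sum_sum_mul_vecMulVec, mul_left_comm _ (1 / h),
    ← Finset.mul_sum, htrace]

lemma one_add_mul_gradientForm_weights (hh : h ≠ 0) (r : ℝ) (p : Vec d) (Γ : Mat d) (w : Vec d) :
    1 + h * gradientForm r p Γ (weights σ t x h w)
      = (1 - ((σ t x * (σ t x)ᵀ)⁻¹ * Γ).trace)
        + h * (r + p ⬝ᵥ H1w σ h t x w + H1w σ h t x w ⬝ᵥ Γ *ᵥ H1w σ h t x w) := by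
  simp only [gradientForm_apply, weights, sum_sum_mul_H2w σ t x hh]
  field_simp
  ring

end Linearization

section OneStep

variable {d : ℕ} (μ : ℝ → Vec d → Vec d) (σ : ℝ → Vec d → Mat d) (h t : ℝ) (x : Vec d)

lemma continuous_euler : Continuous (euler μ σ h t x) := by
  unfold euler
  fun_prop

lemma integrable_comp_euler_smul_weights {f : Vec d → ℝ} (hf : Measurable f) {C : ℝ}
    (hC : ∀ y, |f y| ≤ C) :
    Integrable (fun w => f (euler μ σ h t x w) • weights σ t x h w) (gaussVec d h) :=
  (integrable_weights σ t x).bdd_smul C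
    (hf.comp (continuous_euler μ σ h t x).measurable).aestronglyMeasurable
    (Filter.Eventually.of_forall fun _ => hC _)

/-- The map `Φ (r, p, γ) = r + h F(t, x, r, p, γ)` through which the one-step operator depends on
`E[ψ(X̂) (1, H₁, H₂)]`. -/
def stepMap (F : ℝ → Vec d → ℝ → Vec d → Mat d → ℝ) (q : ℝ × Vec d × Mat d) : ℝ :=
  q.1 + h * F t x q.1 q.2.1 q.2.2

variable {h t x} {F Fr : ℝ → Vec d → ℝ → Vec d → Mat d → ℝ}
  {Fp : ℝ → Vec d → ℝ → Vec d → Mat d → Vec d} {Fγ : ℝ → Vec d → ℝ → Vec d → Mat d → Mat d}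

lemma step_eq_stepMap_integral {f : Vec d → ℝ}
    (hf : Integrable (fun w => f (euler μ σ h t x w) • weights σ t x h w) (gaussVec d h)) :
    step F μ σ h t f x
      = stepMap h t x F (∫ w, f (euler μ σ h t x w) • weights σ t x h w ∂gaussVec d h) := by
  have hp := hf.snd.fst
  have hγ := hf.snd.snd
  have hq : ∫ w, f (euler μ σ h t x w) • weights σ t x h w ∂gaussVec d h
      = (∫ w, f (euler μ σ h t x w) ∂gaussVec d h,
        fun i => ∫ w, f (euler μ σ h t x w) * H1w σ h t x w i ∂gaussVec d h,
        Matrix.of fun i j => ∫ w, f (euler μ σ h t x w) * H2w σ h t x w i j ∂gaussVec d h) := by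
    refine Prod.ext ?_ (Prod.ext ?_ ?_)
    · rw [fst_integral hf]
      simp only [weights, Prod.smul_fst, smul_eq_mul, mul_one]
    · rw [snd_integral hf, fst_integral hf.snd]
      exact funext fun i => eval_integral (integrable_pi_iff.1 hp) i
    · rw [snd_integral hf, snd_integral hf.snd]
      exact Matrix.ext fun i j => integral_matrix_apply hγ i j
  rw [hq]
  rfl

lemma hasFDerivAt_stepMap {r : ℝ} {p : Vec d} {Γ : Mat d} {q : ℝ × Vec d × Mat d}
    (hF : HasFDerivAt (fun q : ℝ × Vec d × Mat d => F t x q.1 q.2.1 q.2.2) (gradientForm r p Γ) q) :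
    HasFDerivAt (stepMap h t x F)
      (ContinuousLinearMap.fst ℝ ℝ (Vec d × Mat d) + h • gradientForm r p Γ) q :=
  hasFDerivAt_fst.add (hF.const_mul h)

theorem step_le_step_add (hh : 0 < h)
    (hF : ∀ r p γ, HasFDerivAt (fun q : ℝ × Vec d × Mat d => F t x q.1 q.2.1 q.2.2)
      (gradientForm (Fr t x r p γ) (Fp t x r p γ) (Fγ t x r p γ)) (r, p, γ))
    (htrace : ∀ r p γ, ((σ t x * (σ t x)ᵀ)⁻¹ * Fγ t x r p γ).trace ≤ 1)
    (hstrict : ∀ r p γ (v : Vec d),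
      0 ≤ Fr t x r p γ + Fp t x r p γ ⬝ᵥ v + v ⬝ᵥ Fγ t x r p γ *ᵥ v)
    {β : ℝ} (hβ : ∀ r p γ, Fr t x r p γ ≤ β) {f g : Vec d → ℝ}
    (hf : Integrable (fun w => f (euler μ σ h t x w) • weights σ t x h w) (gaussVec d h))
    (hg : Integrable (fun w => g (euler μ σ h t x w) • weights σ t x h w) (gaussVec d h))
    {δ : ℝ} (hδ : 0 ≤ δ) (hfg : ∀ y, f y ≤ g y + δ) :
    step F μ σ h t f x ≤ step F μ σ h t g x + δ * (1 + β * h) := by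
  rw [step_eq_stepMap_integral μ σ hf, step_eq_stepMap_integral μ σ hg]
  refine apply_integral_smul_le_of_fderiv_nonneg
    (fun q => hasFDerivAt_stepMap (hF q.1 q.2.1 q.2.2)) (integrable_weights σ t x) hf hg
    (fun q => .of_forall fun w => ?nonneg) (fun q => ?mean) hδ (.of_forall fun w => hfg _)
  case nonneg =>
    have hkernel := one_add_mul_gradientForm_weights σ t x hh.ne' (Fr t x q.1 q.2.1 q.2.2)
      (Fp t x q.1 q.2.1 q.2.2) (Fγ t x q.1 q.2.1 q.2.2) w
    exact (add_nonneg (sub_nonneg.2 (htrace _ _ _))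
      (mul_nonneg hh.le (hstrict _ _ _ _))).trans_eq hkernel.symm
  case mean =>
    rw [integral_weights σ t x hh.le]
    have hmul := mul_le_mul_of_nonneg_right (hβ q.1 q.2.1 q.2.2) hh.le
    have hgrad : gradientForm (Fr t x q.1 q.2.1 q.2.2) (Fp t x q.1 q.2.1 q.2.2)
        (Fγ t x q.1 q.2.1 q.2.2) (1, 0, 0) = Fr t x q.1 q.2.1 q.2.2 := by
      simp [gradientForm_apply]
    simpa [hgrad, mul_comm h] using hmul

end OneStep

lemma exp_mul_affine_mul_one_add_le {β h b s : ℝ} (a : ℝ) (hβ : 0 ≤ β) (hh : 0 ≤ h) (hb : 0 ≤ b)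
    (hs : 0 ≤ s) (hab : 0 ≤ a + b * (s - h)) :
    Real.exp (β * (s - h)) * (a + b * (s - h)) * (1 + β * h)
      ≤ Real.exp (β * s) * (a + b * s) - h * b :=
  calc Real.exp (β * (s - h)) * (a + b * (s - h)) * (1 + β * h)
      ≤ Real.exp (β * (s - h)) * (a + b * (s - h)) * Real.exp (β * h) := by
        gcongr
        linarith [Real.add_one_le_exp (β * h)]
    _ = Real.exp (β * s) * (a + b * s) - Real.exp (β * s) * (h * b) := by
        rw [mul_right_comm, ← Real.exp_add]
        ring_nf
    _ ≤ Real.exp (β * s) * (a + b * s) - h * b := by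
        refine sub_le_sub_left ?_ _
        exact le_mul_of_one_le_left (mul_nonneg hh hb) (Real.one_le_exp (mul_nonneg hβ hs))

theorem Th_strengthened_monotonicity_general
    {d : ℕ} {T : ℝ} (μ : ℝ → Vec d → Vec d) (σ : ℝ → Vec d → Mat d)
    (_hσinv : ∀ s y, IsUnit (σ s y).det)
    {G Gr : ℝ → Vec d → ℝ → Vec d → Mat d → ℝ}
    {Gp : ℝ → Vec d → ℝ → Vec d → Mat d → Vec d}
    {Gγ : ℝ → Vec d → ℝ → Vec d → Mat d → Mat d}
    (hG : ∀ t x r p γ, HasFDerivAt (fun q : ℝ × Vec d × Mat d => G t x q.1 q.2.1 q.2.2)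
      (gradientForm (Gr t x r p γ) (Gp t x r p γ) (Gγ t x r p γ)) (r, p, γ))
    (htrace : ∀ t x r p γ, ((σ t x * (σ t x)ᵀ)⁻¹ * Gγ t x r p γ).trace ≤ 1)
    (hstrict : ∀ t x r p γ (w : Vec d),
      Gr t x r p γ + Gp t x r p γ ⬝ᵥ w + w ⬝ᵥ (Gγ t x r p γ).mulVec w ≥ 0)
    {β : ℝ} (hβ₀ : 0 ≤ β) (hβ : ∀ t x r p γ, Gr t x r p γ ≤ β)
    {a₀ b₀ : ℝ} (ha₀ : 0 ≤ a₀) (hb₀ : 0 ≤ b₀) {φ ψ : ℝ → Vec d → ℝ}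
    (hbdd : ∃ Cb : ℝ, ∀ t ∈ Icc (0 : ℝ) T, ∀ x, |φ t x| ≤ Cb ∧ |ψ t x| ≤ Cb)
    (hφ : ∀ t, Measurable (φ t)) (hψ : ∀ t, Measurable (ψ t))
    (hφψ : ∀ t ∈ Icc (0 : ℝ) T, ∀ x, φ t x ≤ ψ t x)
    {h : ℝ} (hh : 0 < h) {t : ℝ} (ht : 0 ≤ t) (htT : t + h ≤ T) (x : Vec d) :
    Th G μ σ (fun s y => φ s y + Real.exp (β * (T - s)) * (a₀ + b₀ * (T - s))) h t x
      ≤ Th G μ σ ψ h t x + Real.exp (β * (T - t)) * (a₀ + b₀ * (T - t)) - h * b₀ := by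
  obtain ⟨C, hC⟩ := hbdd
  have hmem : t + h ∈ Icc (0 : ℝ) T := ⟨by linarith, htT⟩
  have haff : 0 ≤ a₀ + b₀ * (T - t - h) := add_nonneg ha₀ (mul_nonneg hb₀ (by linarith))
  set δ := Real.exp (β * (T - t - h)) * (a₀ + b₀ * (T - t - h))
  have hφδ : ∀ y, |φ (t + h) y + δ| ≤ C + |δ| := fun y =>
    (abs_add_le _ _).trans (add_le_add_left (hC _ hmem y).1 _)
  have hstep := step_le_step_add μ σ hh (hG t x) (htrace t x) (hstrict t x) (hβ t x)
    (integrable_comp_euler_smul_weights μ σ h t x ((hφ (t + h)).add_const δ) hφδ)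
    (integrable_comp_euler_smul_weights μ σ h t x (hψ (t + h)) fun y => (hC _ hmem y).2)
    (mul_nonneg (Real.exp_pos _).le haff) fun y => add_le_add_left (hφψ _ hmem y) δ
  have hdecay := exp_mul_affine_mul_one_add_le a₀ hβ₀ hh.le hb₀ (by linarith : 0 ≤ T - t) haff
  simp only [Th, ← sub_sub]
  linarith

/-- Strengthened monotonicity (Lemma 3.25 of the paper): for
`δ(t) = e^{β(T−t)}(a₀ + b₀(T−t))` with `β ≥ sup|G_r|`, `a₀, b₀ ≥ 0` and `φ ≤ ψ`,
one has `T_h[φ + δ] ≤ T_h[ψ] + δ(t) − h b₀`. -/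
theorem Th_strengthened_monotonicity
    (d : ℕ) (T : ℝ) (hT : 0 < T)
    (μ : ℝ → Vec d → Vec d) (σ : ℝ → Vec d → Mat d)
    (hμmeas : ∀ i, Measurable fun q : ℝ × Vec d => μ q.1 q.2 i)
    (hσmeas : ∀ i j, Measurable fun q : ℝ × Vec d => σ q.1 q.2 i j)
    (hμbdd : ∃ C : ℝ, ∀ s y, ‖μ s y‖ ≤ C)
    (hσbdd : ∃ C : ℝ, ∀ s y, ‖σ s y‖ ≤ C)
    (hσinv : ∀ s y, IsUnit (σ s y).det)
    (G Gr : ℝ → Vec d → ℝ → Vec d → Mat d → ℝ)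
    (Gp : ℝ → Vec d → ℝ → Vec d → Mat d → Vec d)
    (Gγ : ℝ → Vec d → ℝ → Vec d → Mat d → Mat d)
    (hG : AssumptionF d σ G Gr Gp Gγ)
    (hstrict : ∀ t x r p γ (w : Vec d),
      Gr t x r p γ + Gp t x r p γ ⬝ᵥ w + w ⬝ᵥ (Gγ t x r p γ).mulVec w ≥ 0)
    (β : ℝ) (hβ : ∀ t x r p γ, |Gr t x r p γ| ≤ β)
    (a₀ b₀ : ℝ) (ha₀ : 0 ≤ a₀) (hb₀ : 0 ≤ b₀) :
    ∀ φ ψ : ℝ → Vec d → ℝ,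
      (∃ Cb : ℝ, ∀ t ∈ Icc (0 : ℝ) T, ∀ x, |φ t x| ≤ Cb ∧ |ψ t x| ≤ Cb) →
      Measurable (fun q : ℝ × Vec d => φ q.1 q.2) →
      Measurable (fun q : ℝ × Vec d => ψ q.1 q.2) →
      (∀ t ∈ Icc (0 : ℝ) T, ∀ x, φ t x ≤ ψ t x) →
      ∀ h : ℝ, 0 < h → ∀ t : ℝ, 0 ≤ t → t + h ≤ T → ∀ x : Vec d,
        Th G μ σ
            (fun s y => φ s y + Real.exp (β * (T - s)) * (a₀ + b₀ * (T - s)))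
            h t x
          ≤ Th G μ σ ψ h t x
            + Real.exp (β * (T - t)) * (a₀ + b₀ * (T - t)) - h * b₀ := by
  intro φ ψ hbdd hφ hψ hφψ h hh t ht htT x
  exact Th_strengthened_monotonicity_general μ σ hσinv hG.hasFDerivAt hG.trace_le_one hstrict
    ((abs_nonneg _).trans (hβ 0 0 0 0 0)) (fun t x r p γ => (le_abs_self _).trans (hβ t x r p γ))
    ha₀ hb₀ hbdd (fun _ => hφ.comp measurable_prodMk_left) (fun _ => hψ.comp measurable_prodMk_left)
    hφψ hh ht htT x

end
end

section
/- Let d = 1, c > 0, and let g : ℝ → ℝ be bounded and smooth. Define v(t,x) := E[g(x + √(1+2c)·W_{T−t})] for (t,x) ∈ [0,T]×ℝ, where W_s denotes a centered Gaussian random variable with variance s, and assume that the odd spatial derivatives of v are bounded uniformly in the order, i.e. sup_{k ≥ 0} sup_{t < T, x} |∂_x^{2k+1} v(t,x)| < ∞. For n ∈ ℕ set h := T/n, t_i := i·h, and define the scheme v^h by v^h(t_n,·) := g and v^h(t_{i−1}, x) := E[v^h(t_i, x + W_h)] + c·h·E[v^h(t_i, x + W_h)·(W_h² − h)/h²] for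 i = n,…,1. Then limsup_{n→∞} h^{−1/2} · max_{0 ≤ i ≤ n} sup_{x ∈ ℝ} |v^h(t_i,x) − v(t_i,x)| < ∞. -/
/-!
Let `P_s` be the convolution with the centered Gaussian of variance `s`. Two Gaussian integrations
by parts turn the weight `(W_h² - h) / h²` into a second derivative, so that one step of the scheme
is `P_h (1 + c h ∂²)`, while the exact flow over the same step is `P_{(1+2c)h} = P_h P_{2ch}`: the
scheme replaces the heat flow `P_{2ch}` by an explicit Euler step. This step is unstable in the
supremum norm, but not in the norm given by the supremum of all derivatives: there it has norm at
most `1 + c h`, differs from `P_{2ch}` by `O(h²)`, and `P_h` is a contraction. Hence the error is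
`O(h)`.

The odd derivatives of `v(t, ·)`, `t < T`, control the even ones, and pointwise limits preserve this
norm bound, so that it holds for `g` as well.
-/

open MeasureTheory ProbabilityTheory Real

noncomputable section

/-- The solution of the linear PDE: `v(t,x) = E[g(x + √(1+2c) W_{T−t})]`. -/
def vlin (c T : ℝ) (g : ℝ → ℝ) (t x : ℝ) : ℝ :=
  ∫ w, g (x + Real.sqrt (1 + 2 * c) * w) ∂gaussianReal 0 (T - t).toNNReal

/-- The linear backward scheme with `k` steps remaining before the horizon:
`u_0 = g` and `u_{k+1}(x) = E[u_k(x+W_h)] + c h E[u_k(x+W_h)(W_h²−h)/h²]`. -/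
def linScheme (c h : ℝ) (g : ℝ → ℝ) : ℕ → ℝ → ℝ
  | 0 => g
  | (k + 1) => fun x =>
      (∫ w, linScheme c h g k (x + w) ∂gaussianReal 0 h.toNNReal)
        + c * h * ∫ w, linScheme c h g k (x + w) * ((w ^ 2 - h) / h ^ 2)
            ∂gaussianReal 0 h.toNNReal

open Filter Finset
open scoped ContDiff NNReal Nat Topology

section Taylor

lemma abs_sub_sum_iteratedDeriv_le {f : ℝ → ℝ} {n : ℕ} {K : ℝ} (hf : ContDiff ℝ (n + 1) f)
    (hK : ∀ y, |iteratedDeriv (n + 1) f y| ≤ K) (x w : ℝ) :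
    |f (x + w) - ∑ j ∈ range (n + 1), iteratedDeriv j f x * w ^ j / j !|
      ≤ K * |w| ^ (n + 1) / (n + 1)! := by
  rcases eq_or_ne w 0 with rfl | hw
  · simp [sum_range_succ']
  have hx : x ≠ x + w := by simpa [eq_comm] using hw
  obtain ⟨ξ, -, hξ⟩ := taylor_mean_remainder_lagrange_iteratedDeriv hx hf.contDiffOn
  have hsum : taylorWithinEval f n (Set.uIcc x (x + w)) x (x + w)
      = ∑ j ∈ range (n + 1), iteratedDeriv j f x * w ^ j / j ! := by
    rw [taylor_within_apply]
    refine sum_congr rfl fun j hj => ?_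
    have hjn : (j : ℕ∞ω) ≤ n + 1 := by exact_mod_cast (mem_range.1 hj).le
    rw [iteratedDerivWithin_eq_iteratedDeriv (uniqueDiffOn_uIcc hx)
      (hf.of_le hjn).contDiffAt Set.left_mem_uIcc, add_sub_cancel_left, smul_eq_mul]
    ring
  rw [← hsum, hξ, add_sub_cancel_left, abs_div, abs_mul, abs_pow, Nat.abs_cast]
  gcongr
  exact hK ξ

lemma abs_deriv_le_of_abs_le {f : ℝ → ℝ} {A B : ℝ} (hf : ContDiff ℝ 2 f) (hA : ∀ y, |f y| ≤ A)
    (hB : ∀ y, |iteratedDeriv 2 f y| ≤ B) (x : ℝ) : |deriv f x| ≤ A + B / 2 := by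
  have taylor (w : ℝ) := abs_sub_sum_iteratedDeriv_le (n := 1) (by simpa using! hf) hB x w
  have hr := abs_le.1 (taylor 1)
  have hl := abs_le.1 (taylor (-1))
  have hr' := abs_le.1 (hA (x + 1))
  have hl' := abs_le.1 (hA (x + -1))
  norm_num [sum_range_succ] at hr hl
  exact abs_le.2 ⟨by linarith, by linarith⟩

end Taylor

/-- `f` is smooth and its derivatives of all orders, including `f` itself, are bounded by the same
constant `K`. The least such `K` is the norm in which the error of the scheme is measured. -/
structure DerivsBoundedBy (f : ℝ → ℝ) (K : ℝ) : Prop where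
  contDiff : ContDiff ℝ ∞ f
  abs_iteratedDeriv_le : ∀ (j : ℕ) (x : ℝ), |iteratedDeriv j f x| ≤ K

namespace DerivsBoundedBy

variable {f g : ℝ → ℝ} {K L : ℝ}

lemma of_odd {M : ℝ} (hf : ContDiff ℝ ∞ f) (hK : ∀ x, |f x| ≤ K)
    (hM : ∀ (k : ℕ) (x : ℝ), |iteratedDeriv (2 * k + 1) f x| ≤ M) :
    DerivsBoundedBy f (max K (3 / 2 * M)) := by
  have hM0 : 0 ≤ M := (abs_nonneg _).trans (hM 0 0)
  have hMle : M ≤ max K (3 / 2 * M) := le_max_of_le_right (by linarith)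
  refine ⟨hf, fun j x => ?_⟩
  obtain ⟨k, rfl | rfl⟩ := j.even_or_odd'
  · rcases k with _ | k
    · simpa using Or.inl (hK x)
    have hodd : ContDiff ℝ 2 (iteratedDeriv (2 * k + 1) f) := by
      rw [iteratedDeriv_eq_iterate]
      exact contDiff_infty.1 (hf.iterate_deriv _) 2
    have hnext (y : ℝ) : |iteratedDeriv 2 (iteratedDeriv (2 * k + 1) f) y| ≤ M := by
      rw [iteratedDeriv_succ, iteratedDeriv_one, ← iteratedDeriv_succ, ← iteratedDeriv_succ]
      exact hM (k + 1) y
    have heven := abs_deriv_le_of_abs_le hodd (hM k) hnext x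
    rw [← iteratedDeriv_succ] at heven
    exact heven.trans (le_max_of_le_right (by linarith))
  · exact (hM k x).trans hMle

protected lemma abs_le (hf : DerivsBoundedBy f K) (x : ℝ) : |f x| ≤ K := by
  simpa using hf.abs_iteratedDeriv_le 0 x

protected lemma nonneg (hf : DerivsBoundedBy f K) : 0 ≤ K := (abs_nonneg _).trans (hf.abs_le 0)

lemma contDiff_nat (hf : DerivsBoundedBy f K) (n : ℕ) : ContDiff ℝ n f :=
  contDiff_infty.1 hf.contDiff n

protected lemma hasDerivAt (hf : DerivsBoundedBy f K) (x : ℝ) : HasDerivAt f (deriv f x) x :=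
  (hf.contDiff.differentiable (by simp) x).hasDerivAt

protected lemma measurable (hf : DerivsBoundedBy f K) : Measurable f :=
  hf.contDiff.continuous.measurable

protected lemma deriv (hf : DerivsBoundedBy f K) : DerivsBoundedBy (deriv f) K where
  contDiff := (contDiff_infty_iff_deriv.1 hf.contDiff).2
  abs_iteratedDeriv_le j x := by
    rw [← iteratedDeriv_succ']
    exact hf.abs_iteratedDeriv_le (j + 1) x

protected lemma iteratedDeriv (hf : DerivsBoundedBy f K) (n : ℕ) :
    DerivsBoundedBy (iteratedDeriv n f) K := by
  induction n with
  | zero => simpa using hf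
  | succ n ih => simpa only [iteratedDeriv_succ] using ih.deriv

lemma mono (hf : DerivsBoundedBy f K) (h : K ≤ L) : DerivsBoundedBy f L :=
  ⟨hf.contDiff, fun j x => (hf.abs_iteratedDeriv_le j x).trans h⟩

protected lemma add (hf : DerivsBoundedBy f K) (hg : DerivsBoundedBy g L) :
    DerivsBoundedBy (f + g) (K + L) where
  contDiff := hf.contDiff.add hg.contDiff
  abs_iteratedDeriv_le j x := by
    rw [iteratedDeriv_add (hf.contDiff_nat j).contDiffAt (hg.contDiff_nat j).contDiffAt]
    exact (abs_add_le _ _).trans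
      (add_le_add (hf.abs_iteratedDeriv_le j x) (hg.abs_iteratedDeriv_le j x))

lemma const_mul (hf : DerivsBoundedBy f K) (a : ℝ) :
    DerivsBoundedBy (fun x => a * f x) (|a| * K) where
  contDiff := contDiff_const.mul hf.contDiff
  abs_iteratedDeriv_le j x := by
    rw [iteratedDeriv_const_mul_field, abs_mul]
    exact mul_le_mul_of_nonneg_left (hf.abs_iteratedDeriv_le j x) (abs_nonneg a)

lemma abs_sub_sub_le (hf : DerivsBoundedBy f K) (x w : ℝ) :
    |f (x + w) - f x - deriv f x * w| ≤ K / 2 * |w| ^ 2 := by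
  have h := abs_sub_sum_iteratedDeriv_le (n := 1) (hf.contDiff_nat 2)
    (hf.abs_iteratedDeriv_le 2) x w
  norm_num [sum_range_succ, ← sub_sub] at h
  rw [sq_abs]
  linarith

/-- By compactness the derivatives at `x` converge along the ultrafilter, and the second order
Taylor estimate survives the limit. -/
lemma hasDerivAt_of_tendsto {ι : Type*} {U : Ultrafilter ι} {F : ι → ℝ → ℝ}
    (hF : ∀ᶠ i in U, DerivsBoundedBy (F i) K) (hlim : ∀ x, Tendsto (F · x) U (𝓝 (f x))) (x : ℝ) :
    ∃ L, HasDerivAt f L x ∧ Tendsto (fun i => deriv (F i) x) U (𝓝 L) := by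
  have hmem : ∀ᶠ i in U, deriv (F i) x ∈ Set.Icc (-K) K :=
    hF.mono fun i hi => abs_le.1 (hi.deriv.abs_le x)
  obtain ⟨L, -, hL⟩ := isCompact_Icc.ultrafilter_le_nhds
    (U.map fun i => deriv (F i) x) (le_principal_iff.2 hmem)
  replace hL : Tendsto (fun i => deriv (F i) x) U (𝓝 L) := hL
  refine ⟨L, ?_, hL⟩
  have htaylor (w : ℝ) : |f (x + w) - f x - L * w| ≤ K / 2 * |w| ^ 2 :=
    le_of_tendsto (((hlim (x + w)).sub (hlim x)).sub (hL.mul_const w)).abs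
      (hF.mono fun i hi => hi.abs_sub_sub_le x w)
  rw [hasDerivAt_iff_isLittleO_nhds_zero]
  refine (Asymptotics.IsBigO.of_bound (K / 2) (.of_forall fun w => ?_)).trans_isLittleO
    (Asymptotics.isLittleO_pow_id one_lt_two)
  simpa [mul_comm] using htaylor w

lemma of_tendsto {ι : Type*} {l : Filter ι} [l.NeBot] {F : ι → ℝ → ℝ}
    (hF : ∀ᶠ i in l, DerivsBoundedBy (F i) K) (hlim : ∀ x, Tendsto (F · x) l (𝓝 (f x))) :
    DerivsBoundedBy f K := by
  set U := Ultrafilter.of l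
  replace hF : ∀ᶠ i in U, DerivsBoundedBy (F i) K := Ultrafilter.of_le l hF
  have hderiv (j : ℕ) (h : ∀ x, Tendsto (fun i => iteratedDeriv j (F i) x) U
      (𝓝 (iteratedDeriv j f x))) :=
    hasDerivAt_of_tendsto (hF.mono fun i hi => hi.iteratedDeriv j) h
  have hconv (j : ℕ) (x : ℝ) : Tendsto (fun i => iteratedDeriv j (F i) x) U
      (𝓝 (iteratedDeriv j f x)) := by
    induction j generalizing x with
    | zero => simpa using (hlim x).mono_left (Ultrafilter.of_le l)
    | succ j ih =>
      obtain ⟨L, hL, hFL⟩ := hderiv j ih x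
      simpa only [iteratedDeriv_succ, hL.deriv] using hFL
  refine ⟨contDiff_of_differentiable_iteratedDeriv fun j _ x => ?_, fun j x => ?_⟩
  · obtain ⟨L, hL, -⟩ := hderiv j (hconv j) x
    exact hL.differentiableAt
  · exact le_of_tendsto (hconv j x).abs (hF.mono fun i hi => hi.abs_iteratedDeriv_le j x)

end DerivsBoundedBy

section GaussianIntegrationByParts

variable {m : ℝ} {v : ℝ≥0} {f f' : ℝ → ℝ} {K : ℝ}

lemma hasDerivAt_gaussianPDFReal (m : ℝ) (v : ℝ≥0) (x : ℝ) :
    HasDerivAt (gaussianPDFReal m v) (-((x - m) / v) * gaussianPDFReal m v x) x := by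
  have hexp : HasDerivAt (fun y => -(y - m) ^ 2 / (2 * v)) (-((x - m) / v)) x := by
    refine ((((hasDerivAt_id x).sub_const m).pow 2).neg.div_const (2 * (v : ℝ))).congr_deriv ?_
    simp only [id, Nat.cast_ofNat]
    ring
  refine (hexp.exp.const_mul (√(2 * π * v))⁻¹).congr_deriv ?_
  rw [gaussianPDFReal_def]
  ring

lemma integrable_gaussianReal_iff (hv : v ≠ 0) :
    Integrable f (gaussianReal m v) ↔ Integrable fun x => gaussianPDFReal m v x * f x := by
  rw [gaussianReal_of_var_ne_zero m hv,
    integrable_withDensity_iff_integrable_smul' (measurable_gaussianPDF m v)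
      (.of_forall fun _ => gaussianPDF_lt_top)]
  simp only [toReal_gaussianPDF, smul_eq_mul]

lemma integral_sub_mul_gaussianReal (hf : ∀ x, HasDerivAt f (f' x) x)
    (hf_int : Integrable f (gaussianReal m v))
    (hmul_int : Integrable (fun x => (x - m) * f x) (gaussianReal m v))
    (hf'_int : Integrable f' (gaussianReal m v)) :
    ∫ x, (x - m) * f x ∂gaussianReal m v = v * ∫ x, f' x ∂gaussianReal m v := by
  rcases eq_or_ne v 0 with rfl | hv
  · simp
  rw [integrable_gaussianReal_iff hv] at hf_int hmul_int hf'_int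
  have hv' : (v : ℝ) ≠ 0 := by exact_mod_cast hv
  have hparts := integral_mul_deriv_eq_deriv_mul_of_integrable
    (fun x _ => hasDerivAt_gaussianPDFReal m v x) (fun x _ => hf x) hf'_int
    (by
      convert! hmul_int.const_mul (-(v : ℝ)⁻¹) using 2
      simp only [Pi.mul_apply]
      ring) hf_int
  simp only [integral_gaussianReal_eq_integral_smul hv, smul_eq_mul, hparts]
  rw [← integral_neg, ← integral_const_mul]
  congr 1 with x
  field_simp

lemma integrable_pow_gaussianReal (n : ℕ) : Integrable (fun x => x ^ n) (gaussianReal m v) :=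
  ((memLp_id_gaussianReal n).integrable_norm_pow').mono' (by fun_prop)
    (.of_forall fun x => by simp)

lemma integrable_pow_mul_gaussianReal (n : ℕ) (hf : Measurable f) (hK : ∀ x, |f x| ≤ K) :
    Integrable (fun x => x ^ n * f x) (gaussianReal m v) :=
  (integrable_pow_gaussianReal n).mul_bdd hf.aestronglyMeasurable (.of_forall hK)

lemma integral_pow_add_two_gaussianReal (v : ℝ≥0) (n : ℕ) :
    ∫ x, x ^ (n + 2) ∂gaussianReal 0 v = (n + 1) * v * ∫ x, x ^ n ∂gaussianReal 0 v := by
  have h := integral_sub_mul_gaussianReal (m := 0) (v := v) (fun x => hasDerivAt_pow (n + 1) x)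
    (integrable_pow_gaussianReal _)
    (by simpa only [sub_zero, ← pow_succ'] using integrable_pow_gaussianReal _)
    ((integrable_pow_gaussianReal n).const_mul _)
  simp only [sub_zero, ← pow_succ', add_tsub_cancel_right, integral_const_mul] at h
  rw [h]
  push_cast
  ring

lemma integral_sq_sub_mul_gaussianReal (hf : ContDiff ℝ 2 f)
    (hK : ∀ j ≤ 2, ∀ x, |iteratedDeriv j f x| ≤ K) :
    ∫ x, (x ^ 2 - v) * f x ∂gaussianReal 0 v
      = v ^ 2 * ∫ x, iteratedDeriv 2 f x ∂gaussianReal 0 v := by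
  have hint (n j : ℕ) (hj : j ≤ 2) :
      Integrable (fun x => x ^ n * iteratedDeriv j f x) (gaussianReal 0 v) :=
    integrable_pow_mul_gaussianReal n
      (hf.continuous_iteratedDeriv j (by exact_mod_cast hj)).measurable (hK j hj)
  have hderiv (j : ℕ) (hj : j < 2) (x : ℝ) :
      HasDerivAt (iteratedDeriv j f) (iteratedDeriv (j + 1) f x) x := by
    rw [iteratedDeriv_succ]
    exact (hf.differentiable_iteratedDeriv j (by exact_mod_cast hj) x).hasDerivAt
  have h₀ : ∫ x, x ^ 2 * f x ∂gaussianReal 0 v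
      = v * ∫ x, (f x + x * deriv f x) ∂gaussianReal 0 v := by
    have h := integral_sub_mul_gaussianReal (m := 0) (v := v)
      (fun x => (hasDerivAt_id x).mul (hderiv 0 two_pos x))
      (by simpa using! hint 1 0 zero_le_two)
      (by simpa [← mul_assoc, ← sq] using hint 2 0 zero_le_two)
      (by simpa using! (hint 0 0 zero_le_two).add (hint 1 1 one_le_two))
    simpa [← mul_assoc, ← sq] using! h
  have h₁ : ∫ x, x * deriv f x ∂gaussianReal 0 v
      = v * ∫ x, iteratedDeriv 2 f x ∂gaussianReal 0 v := by
    have h := integral_sub_mul_gaussianReal (m := 0) (v := v) (hderiv 1 one_lt_two)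
      (by simpa using hint 0 1 one_le_two) (by simpa using hint 1 1 one_le_two)
      (by simpa using hint 0 2 le_rfl)
    simpa using h
  have hf_int : Integrable f (gaussianReal 0 v) := by simpa using hint 0 0 zero_le_two
  simp only [sub_mul]
  rw [integral_sub (by simpa using hint 2 0 zero_le_two) (hf_int.const_mul _), h₀,
    integral_add hf_int (by simpa using hint 1 1 one_le_two), h₁, integral_const_mul]
  ring

end GaussianIntegrationByParts

section Laplace

variable {μ : Measure ℝ} {f : ℝ → ℝ} {K : ℝ}

lemma contDiff_mgf_id (hμ : ∀ t, Integrable (fun y => exp (t * y)) μ) {n : ℕ∞ω} :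
    ContDiff ℝ n (mgf id μ) :=
  contDiff_iff_contDiffAt.2 fun t => AnalyticAt.contDiffAt <| analyticAt_mgf <| by
    simp [show integrableExpSet id μ = Set.univ from Set.eq_univ_of_forall hμ]

lemma contDiff_integral_exp_mul_mul (hμ : ∀ t, Integrable (fun y => exp (t * y)) μ)
    (hf : Measurable f) (hK : ∀ y, |f y| ≤ K) {n : ℕ∞ω} :
    ContDiff ℝ n fun t => ∫ y, exp (t * y) * f y ∂μ := by
  -- `f + K` is the density of a positive measure, whose moment generating function is analytic.
  set ν := μ.withDensity fun y => ENNReal.ofReal (f y + K)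
  have hν_density (u : ℝ → ℝ) : ∫ y, u y ∂ν = ∫ y, (f y + K) * u y ∂μ := by
    rw [integral_withDensity_eq_integral_toReal_smul (by fun_prop) (by simp)]
    congr 1 with y
    rw [ENNReal.toReal_ofReal (by linarith [(abs_le.1 (hK y)).1]), smul_eq_mul]
  have hν_le : ν ≤ ENNReal.ofReal (2 * K) • μ := by
    rw [← withDensity_const]
    refine withDensity_mono (.of_forall fun y => ENNReal.ofReal_le_ofReal ?_)
    linarith [(abs_le.1 (hK y)).2]
  have hν (t : ℝ) : Integrable (fun y => exp (t * y)) ν :=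
    ((hμ t).smul_measure ENNReal.ofReal_ne_top).mono_measure hν_le
  have hmgf (t : ℝ) : ∫ y, exp (t * y) * f y ∂μ = mgf id ν t - K * mgf id μ t := by
    have hint : Integrable (fun y => exp (t * y) * f y) μ :=
      (hμ t).mul_bdd hf.aestronglyMeasurable (.of_forall hK)
    rw [mgf, hν_density, mgf, ← integral_const_mul]
    simp only [id, add_mul, mul_comm (f _)]
    rw [integral_add hint ((hμ t).const_mul K), add_sub_cancel_right]
  simp only [hmgf]
  exact (contDiff_mgf_id hν).sub (contDiff_const.mul (contDiff_mgf_id hμ))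

end Laplace

/-- The heat semigroup in terms of the variance: `gaussAvg v f x = E[f (x + W_v)]`. -/
def gaussAvg (v : ℝ≥0) (f : ℝ → ℝ) (x : ℝ) : ℝ := ∫ w, f (x + w) ∂gaussianReal 0 v

section GaussAvg

variable {v v₁ v₂ : ℝ≥0} {f g : ℝ → ℝ} {K : ℝ}

@[simp]
lemma gaussAvg_zero (f : ℝ → ℝ) : gaussAvg 0 f = f := by
  ext x
  simp [gaussAvg]

lemma integrable_comp_add_gaussianReal (hf : Measurable f) (hK : ∀ y, |f y| ≤ K) (x : ℝ) :
    Integrable (fun w => f (x + w)) (gaussianReal 0 v) :=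
  .of_bound (Measurable.aestronglyMeasurable (by fun_prop)) K (.of_forall fun _ => hK _)

lemma abs_gaussAvg_le (v : ℝ≥0) (hK : ∀ y, |f y| ≤ K) (x : ℝ) : |gaussAvg v f x| ≤ K := by
  simpa [gaussAvg] using norm_integral_le_of_norm_le_const (μ := gaussianReal 0 v)
    (f := fun w => f (x + w)) (.of_forall fun w => hK (x + w))

lemma gaussAvg_gaussAvg (hf : Measurable f) (hK : ∀ y, |f y| ≤ K) :
    gaussAvg v₁ (gaussAvg v₂ f) = gaussAvg (v₁ + v₂) f := by
  ext x
  have hint := integrable_comp_add_gaussianReal (v := v₁ + v₂) hf hK x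
  rw [← add_zero (0 : ℝ), ← gaussianReal_conv_gaussianReal] at hint
  simp only [gaussAvg]
  conv_rhs => rw [← add_zero (0 : ℝ), ← gaussianReal_conv_gaussianReal, integral_conv hint]
  simp only [add_assoc]

lemma gaussAvg_eq_integral_standard (hf : Measurable f) (v : ℝ≥0) (x : ℝ) :
    gaussAvg v f x = ∫ z, f (x + √v * z) ∂gaussianReal 0 1 := by
  have hmap : (gaussianReal 0 1).map (√v * ·) = gaussianReal 0 v := by
    simp [gaussianReal_map_const_mul]
  rw [gaussAvg, ← hmap, integral_map (by fun_prop) (Measurable.aestronglyMeasurable (by fun_prop))]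

lemma continuous_gaussAvg_variance (hf : Continuous f) (hK : ∀ y, |f y| ≤ K) (x : ℝ) :
    Continuous fun v => gaussAvg v f x := by
  simp only [gaussAvg_eq_integral_standard hf.measurable]
  exact continuous_of_dominated (fun _ => by fun_prop) (fun _ => .of_forall fun _ => hK _)
    (integrable_const K) (.of_forall fun _ => by fun_prop)

lemma gaussAvg_eq_exp_mul_integral (hv : v ≠ 0) (f : ℝ → ℝ) (x : ℝ) :
    gaussAvg v f x
      = exp (-x ^ 2 / (2 * v)) * ∫ y, exp (x / v * y) * f y ∂gaussianReal 0 v := by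
  have hsquare (y : ℝ) : gaussianPDFReal 0 v (y - x)
      = exp (-x ^ 2 / (2 * v)) * gaussianPDFReal 0 v y * exp (x / v * y) := by
    simp only [gaussianPDFReal, mul_left_comm (exp _), mul_assoc, ← Real.exp_add]
    congr 2
    field_simp
    ring
  rw [gaussAvg, integral_gaussianReal_eq_integral_smul hv, ← integral_sub_right_eq_self _ x,
    integral_gaussianReal_eq_integral_smul hv, ← integral_const_mul]
  simp only [smul_eq_mul, add_sub_cancel, hsquare, mul_assoc]

lemma contDiff_gaussAvg (hv : v ≠ 0) (hf : Measurable f) (hK : ∀ y, |f y| ≤ K) {n : ℕ∞ω} :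
    ContDiff ℝ n (gaussAvg v f) := by
  have hlaplace := contDiff_integral_exp_mul_mul (n := n) (μ := gaussianReal 0 v)
    integrable_exp_mul_gaussianReal hf hK
  simp only [funext (gaussAvg_eq_exp_mul_integral hv f)]
  exact ContDiff.mul (by fun_prop) (hlaplace.comp (contDiff_id.div_const _))

end GaussAvg

namespace DerivsBoundedBy

variable {f g : ℝ → ℝ} {K L : ℝ}

lemma integrable_comp_add (hf : DerivsBoundedBy f K) (v : ℝ≥0) (x : ℝ) :
    Integrable (fun w => f (x + w)) (gaussianReal 0 v) :=
  integrable_comp_add_gaussianReal hf.measurable hf.abs_le x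

lemma gaussAvg_add (hf : DerivsBoundedBy f K) (hg : DerivsBoundedBy g L) (v : ℝ≥0) :
    gaussAvg v (f + g) = gaussAvg v f + gaussAvg v g :=
  funext fun x => integral_add (hf.integrable_comp_add v x) (hg.integrable_comp_add v x)

lemma hasDerivAt_gaussAvg (hf : DerivsBoundedBy f K) (v : ℝ≥0) (x : ℝ) :
    HasDerivAt (gaussAvg v f) (gaussAvg v (deriv f) x) x :=
  (hasDerivAt_integral_of_dominated_loc_of_deriv_le (F := fun y w => f (y + w))
    (F' := fun y w => deriv f (y + w)) univ_mem
    (.of_forall fun y => (hf.integrable_comp_add v y).aestronglyMeasurable)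
    (hf.integrable_comp_add v x) (hf.deriv.integrable_comp_add v x).aestronglyMeasurable
    (.of_forall fun _ _ _ => hf.deriv.abs_le _) (integrable_const K)
    (.of_forall fun w y _ => (hf.hasDerivAt (y + w)).comp_add_const y w)).2

lemma iteratedDeriv_gaussAvg (hf : DerivsBoundedBy f K) (v : ℝ≥0) (j : ℕ) :
    iteratedDeriv j (gaussAvg v f) = gaussAvg v (iteratedDeriv j f) := by
  induction j with
  | zero => simp
  | succ j ih =>
    rw [iteratedDeriv_succ, iteratedDeriv_succ, ih]
    exact funext fun x => ((hf.iteratedDeriv j).hasDerivAt_gaussAvg v x).deriv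

protected lemma gaussAvg (hf : DerivsBoundedBy f K) (v : ℝ≥0) :
    DerivsBoundedBy (gaussAvg v f) K where
  contDiff := contDiff_of_differentiable_iteratedDeriv fun j _ x => by
    rw [hf.iteratedDeriv_gaussAvg]
    exact ((hf.iteratedDeriv j).hasDerivAt_gaussAvg v x).differentiableAt
  abs_iteratedDeriv_le j x := by
    rw [hf.iteratedDeriv_gaussAvg]
    exact abs_gaussAvg_le v (hf.abs_iteratedDeriv_le j) x

end DerivsBoundedBy

/-- The explicit Euler step of length `a` for the heat equation `∂ₜ u = ∂ₓₓ u`, whose exact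
flow over time `a` is `gaussAvg (2 * a)`. -/
def eulerStep (a : ℝ) (f : ℝ → ℝ) (x : ℝ) : ℝ := f x + a * iteratedDeriv 2 f x

namespace DerivsBoundedBy

variable {f g : ℝ → ℝ} {K L : ℝ}

protected lemma eulerStep (hf : DerivsBoundedBy f K) (a : ℝ) :
    DerivsBoundedBy (eulerStep a f) ((1 + |a|) * K) := by
  rw [one_add_mul]
  exact hf.add ((hf.iteratedDeriv 2).const_mul a)

lemma eulerStep_add (hf : DerivsBoundedBy f K) (hg : DerivsBoundedBy g L) (a : ℝ) :
    eulerStep a (f + g) = eulerStep a f + eulerStep a g := by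
  ext x
  simp only [eulerStep, Pi.add_apply,
    iteratedDeriv_add (hf.contDiff_nat 2).contDiffAt (hg.contDiff_nat 2).contDiffAt]
  ring

lemma iteratedDeriv_eulerStep (hf : DerivsBoundedBy f K) (a : ℝ) (j : ℕ) :
    iteratedDeriv j (eulerStep a f) = eulerStep a (iteratedDeriv j f) := by
  ext x
  have hcomm : iteratedDeriv j (iteratedDeriv 2 f) = iteratedDeriv 2 (iteratedDeriv j f) := by
    simp only [iteratedDeriv_eq_iterate, ← Function.iterate_add_apply, add_comm]
  rw [eulerStep, ← hcomm, ← iteratedDeriv_const_mul_field]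
  exact iteratedDeriv_add (hf.contDiff_nat j).contDiffAt
    (((hf.iteratedDeriv 2).const_mul a).contDiff_nat j).contDiffAt

lemma abs_gaussAvg_sub_eulerStep_le (hf : DerivsBoundedBy f K) (a : ℝ≥0) (x : ℝ) :
    |gaussAvg (2 * a) f x - eulerStep a f x| ≤ a ^ 2 / 2 * K := by
  have hint (j : ℕ) (b : ℝ) : Integrable (fun w => b * w ^ j / (j)!) (gaussianReal 0 (2 * a)) :=
    ((integrable_pow_gaussianReal j).const_mul b).div_const _
  have hmean : ∫ w, ∑ j ∈ range 4, iteratedDeriv j f x * w ^ j / (j)! ∂gaussianReal 0 (2 * a)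
      = eulerStep a f x := by
    rw [integral_finsetSum _ fun j _ => hint j _]
    simp [sum_range_succ, integral_div, integral_const_mul, integral_pow_add_two_gaussianReal,
      eulerStep]
    ring
  have hremainder : ∫ w, K * w ^ 4 / 4! ∂gaussianReal 0 (2 * a) = a ^ 2 / 2 * K := by
    simp [integral_div, integral_const_mul, integral_pow_add_two_gaussianReal, Nat.factorial]
    ring
  have htaylor (w : ℝ) := abs_sub_sum_iteratedDeriv_le (n := 3) (hf.contDiff_nat 4)
    (hf.abs_iteratedDeriv_le 4) x w
  rw [← Real.norm_eq_abs, gaussAvg, ← hmean, ← hremainder,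
    ← integral_sub (hf.integrable_comp_add _ x) (integrable_finsetSum _ fun j _ => hint j _)]
  refine norm_integral_le_of_norm_le (hint 4 K) (.of_forall fun w => ?_)
  simpa only [Even.pow_abs (by decide : Even (3 + 1))] using! htaylor w

lemma eulerStep_sub_gaussAvg (hf : DerivsBoundedBy f K) (a : ℝ≥0) :
    DerivsBoundedBy (eulerStep a f - gaussAvg (2 * a) f) (a ^ 2 / 2 * K) where
  contDiff := (hf.eulerStep _).contDiff.sub (hf.gaussAvg _).contDiff
  abs_iteratedDeriv_le j x := by
    rw [iteratedDeriv_sub ((hf.eulerStep _).contDiff_nat j).contDiffAt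
      ((hf.gaussAvg _).contDiff_nat j).contDiffAt, hf.iteratedDeriv_gaussAvg,
      hf.iteratedDeriv_eulerStep, abs_sub_comm]
    exact (hf.iteratedDeriv j).abs_gaussAvg_sub_eulerStep_le a x

lemma gaussAvg_eulerStep_sub_gaussAvg (hg : DerivsBoundedBy g K) (hfg : DerivsBoundedBy (f - g) L)
    (v a : ℝ≥0) :
    DerivsBoundedBy (gaussAvg v (eulerStep a f) - gaussAvg (v + 2 * a) g)
      ((1 + a) * L + a ^ 2 / 2 * K) := by
  have herror : DerivsBoundedBy (eulerStep a (f - g) + (eulerStep a g - gaussAvg (2 * a) g))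
      ((1 + a) * L + a ^ 2 / 2 * K) := by
    simpa only [NNReal.abs_eq] using (hfg.eulerStep a).add (hg.eulerStep_sub_gaussAvg a)
  have hsplit : eulerStep a f
      = (eulerStep a (f - g) + (eulerStep a g - gaussAvg (2 * a) g)) + gaussAvg (2 * a) g := by
    rw [add_assoc, sub_add_cancel, ← hfg.eulerStep_add hg, sub_add_cancel]
  rw [hsplit, herror.gaussAvg_add (hg.gaussAvg _), gaussAvg_gaussAvg hg.measurable hg.abs_le,
    add_sub_cancel_right]
  exact herror.gaussAvg v

end DerivsBoundedBy

section Scheme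

variable {f g : ℝ → ℝ} {K : ℝ}

lemma integral_mul_sq_sub_div_gaussianReal (hf : DerivsBoundedBy f K) {h : ℝ≥0} (hh : h ≠ 0)
    (x : ℝ) : ∫ w, f (x + w) * ((w ^ 2 - h) / h ^ 2) ∂gaussianReal 0 h
      = gaussAvg h (iteratedDeriv 2 f) x := by
  have hshift (j : ℕ) (w : ℝ) :
      iteratedDeriv j (fun w => f (x + w)) w = iteratedDeriv j f (x + w) :=
    congrFun (iteratedDeriv_comp_const_add j f x) w
  have hparts := integral_sq_sub_mul_gaussianReal (v := h) (f := fun w => f (x + w)) (K := K)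
    ((hf.contDiff_nat 2).comp (by fun_prop))
    fun j _ w => by simpa only [hshift] using hf.abs_iteratedDeriv_le j (x + w)
  have hh' : (h : ℝ) ^ 2 ≠ 0 := by positivity
  calc ∫ w, f (x + w) * ((w ^ 2 - h) / h ^ 2) ∂gaussianReal 0 h
      = (∫ w, (w ^ 2 - h) * f (x + w) ∂gaussianReal 0 h) / h ^ 2 := by
        rw [← integral_div]
        congr 1 with w
        ring
    _ = gaussAvg h (iteratedDeriv 2 f) x := by
        rw [hparts, mul_div_cancel_left₀ _ hh']
        simp only [hshift, gaussAvg]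

lemma linScheme_succ_eq_gaussAvg_eulerStep {c : ℝ} {h : ℝ≥0} {k : ℕ} (hh : h ≠ 0)
    (hu : DerivsBoundedBy (linScheme c h g k) K) :
    linScheme c h g (k + 1) = gaussAvg h (eulerStep (c * h) (linScheme c h g k)) := by
  ext x
  simp only [linScheme, toNNReal_coe, integral_mul_sq_sub_div_gaussianReal hu hh]
  simp only [gaussAvg, eulerStep]
  rw [integral_add (hu.integrable_comp_add h x)
    (((hu.iteratedDeriv 2).integrable_comp_add h x).const_mul _), integral_const_mul]

lemma vlin_eq_gaussAvg {c : ℝ} (hc : 0 ≤ 1 + 2 * c) (T : ℝ) (hg : Measurable g) (t : ℝ) :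
    vlin c T g t = gaussAvg ((1 + 2 * c) * (T - t)).toNNReal g := by
  have hmap : (gaussianReal 0 (T - t).toNNReal).map (√(1 + 2 * c) * ·)
      = gaussianReal 0 ((1 + 2 * c) * (T - t)).toNNReal := by
    rw [gaussianReal_map_const_mul, mul_zero, toNNReal_mul hc]
    congr 2
    simp [← NNReal.coe_inj, hc]
  ext x
  rw [vlin, gaussAvg, ← hmap,
    integral_map (by fun_prop) (Measurable.aestronglyMeasurable (by fun_prop))]

lemma derivsBoundedBy_of_odd_vlin {c T M : ℝ} (hc : 0 < 1 + 2 * c) (hg : Continuous g)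
    (hK : ∀ x, |g x| ≤ K)
    (hM : ∀ (k : ℕ) (t : ℝ), t < T → ∀ x, |iteratedDeriv (2 * k + 1) (vlin c T g t) x| ≤ M) :
    DerivsBoundedBy g (max K (3 / 2 * M)) := by
  have hv (t : ℝ) := vlin_eq_gaussAvg hc.le T hg.measurable t
  have hbdd : ∀ t < T, DerivsBoundedBy (vlin c T g t) (max K (3 / 2 * M)) := fun t ht => by
    have hvar : ((1 + 2 * c) * (T - t)).toNNReal ≠ 0 :=
      (toNNReal_pos.2 (mul_pos hc (sub_pos.2 ht))).ne'
    refine .of_odd ?_ (fun x => ?_) fun k x => hM k t ht x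
    · rw [hv]
      exact contDiff_gaussAvg hvar hg.measurable hK
    · rw [hv]
      exact abs_gaussAvg_le _ hK x
  have hcont (x : ℝ) : Continuous fun t => vlin c T g t x := by
    simp only [hv]
    exact (continuous_gaussAvg_variance hg hK x).comp (by fun_prop)
  have hterminal : vlin c T g T = g := by simp [hv]
  refine .of_tendsto (l := 𝓝[<] T) (eventually_mem_nhdsWithin.mono hbdd) fun x => ?_
  simpa only [hterminal] using ((hcont x).tendsto T).mono_left nhdsWithin_le_nhds

/-- The bound solves the recursion `e ↦ (1 + c * h) * e + (c * h) ^ 2 / 2 * K` from `0`. -/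
lemma derivsBoundedBy_linScheme_sub_gaussAvg (hg : DerivsBoundedBy g K) (c : ℝ≥0) {h : ℝ≥0}
    (hh : h ≠ 0) (k : ℕ) :
    DerivsBoundedBy (linScheme c h g k - gaussAvg (k * ((1 + 2 * c) * h)) g)
      (c * h / 2 * ((1 + c * h) ^ k - 1) * K) := by
  induction k with
  | zero => exact ⟨by simpa [linScheme] using! contDiff_const, by simp [linScheme]⟩
  | succ k ih =>
    have hflow := hg.gaussAvg (k * ((1 + 2 * c) * h))
    have hu := ih.add hflow
    rw [sub_add_cancel] at hu
    have hvar : ((k + 1 : ℕ) * ((1 + 2 * c) * h) : ℝ≥0)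
        = h + 2 * (c * h) + k * ((1 + 2 * c) * h) := by
      push_cast
      ring
    rw [linScheme_succ_eq_gaussAvg_eulerStep hh hu, hvar,
      ← gaussAvg_gaussAvg hg.measurable hg.abs_le]
    refine (hflow.gaussAvg_eulerStep_sub_gaussAvg ih h (c * h)).mono (le_of_eq ?_)
    push_cast
    ring

lemma abs_linScheme_sub_vlin_le (hg : DerivsBoundedBy g K) {c h : ℝ} (hc : 0 ≤ c) (hh : 0 < h)
    (T : ℝ) (k : ℕ) (x : ℝ) :
    |linScheme c h g k x - vlin c T g (T - k * h) x| ≤ c / 2 * exp (c * (k * h)) * K * h := by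
  have hK := hg.nonneg
  have hpow : (1 + c * h) ^ k ≤ exp (c * (k * h)) := by
    rw [mul_left_comm, Real.exp_nat_mul]
    gcongr
    linarith [add_one_le_exp (c * h)]
  lift c to ℝ≥0 using hc
  lift h to ℝ≥0 using hh.le
  have hvar : ((1 + 2 * c : ℝ) * (T - (T - k * h))).toNNReal = k * ((1 + 2 * c) * h) := by
    rw [sub_sub_cancel, mul_left_comm]
    exact_mod_cast toNNReal_coe (r := k * ((1 + 2 * c) * h))
  have herror := derivsBoundedBy_linScheme_sub_gaussAvg hg c (by exact_mod_cast hh.ne') k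
  rw [← hvar, ← vlin_eq_gaussAvg (by positivity) T hg.measurable] at herror
  calc |linScheme c h g k x - vlin c T g (T - k * h) x|
      ≤ c * h / 2 * ((1 + c * h) ^ k - 1) * K := herror.abs_le x
    _ ≤ c * h / 2 * exp (c * (k * h)) * K := by gcongr; linarith
    _ = c / 2 * exp (c * (k * h)) * K * h := by ring

end Scheme

lemma mul_le_abs_mul_sqrt_mul_sqrt {h T : ℝ} (C : ℝ) (hh : 0 ≤ h) (hT : h ≤ T) :
    C * h ≤ |C| * √T * √h := by
  calc C * h ≤ |C| * (√h * √h) := by rw [mul_self_sqrt hh]; gcongr; exact le_abs_self C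
    _ ≤ |C| * √T * √h := by rw [← mul_assoc]; gcongr

theorem linear_case_rate_of_convergence_general (T c : ℝ) (hT : 0 < T) (hc : 0 ≤ c)
    (g : ℝ → ℝ) (hg : Continuous g) (hgbdd : ∃ Cg : ℝ, ∀ x, |g x| ≤ Cg)
    (hodd : ∃ M : ℝ, ∀ k : ℕ, ∀ t : ℝ, t < T → ∀ x : ℝ,
      |iteratedDeriv (2 * k + 1) (fun y => vlin c T g t y) x| ≤ M) :
    ∃ C : ℝ, ∀ n : ℕ, 0 < n → ∀ i : ℕ, i ≤ n → ∀ x : ℝ,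
      |linScheme c (T / n) g (n - i) x - vlin c T g (i * (T / n)) x| ≤ C * (T / n) := by
  obtain ⟨Cg, hCg⟩ := hgbdd
  obtain ⟨M, hM⟩ := hodd
  have hK := derivsBoundedBy_of_odd_vlin (by positivity) hg hCg hM
  set K := max Cg (3 / 2 * M)
  refine ⟨c / 2 * exp (c * T) * K, fun n hn i hi x => ?_⟩
  have := hK.nonneg
  have hn' : (n : ℝ) ≠ 0 := by positivity
  have htime : T - (n - i : ℕ) * (T / n) = i * (T / n) := by
    rw [Nat.cast_sub hi]
    field_simp
    ring
  have hremaining : (n - i : ℕ) * (T / n) ≤ T := by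
    have : 0 ≤ i * (T / n) := by positivity
    linarith
  rw [← htime]
  refine (abs_linScheme_sub_vlin_le hK hc (by positivity) T (n - i) x).trans ?_
  gcongr

/-- Proposition 3.32 of the paper: in the linear case `F(γ) = c γ`, the scheme
converges at the rate `√h`:
`limsup_{h→0} h^{−1/2} max_i sup_x |v^h(t_i,·) − v(t_i,·)| < ∞`. -/
theorem linear_case_rate_of_convergence
    (T c : ℝ) (hT : 0 < T) (hc : 0 < c)
    (g : ℝ → ℝ) (hg : ContDiff ℝ (⊤ : ℕ∞) g) (hgbdd : ∃ Cg : ℝ, ∀ x, |g x| ≤ Cg)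
    (hodd : ∃ M : ℝ, ∀ k : ℕ, ∀ t : ℝ, t < T → ∀ x : ℝ,
      |iteratedDeriv (2 * k + 1) (fun y => vlin c T g t y) x| ≤ M) :
    ∃ C : ℝ, ∃ N : ℕ, ∀ n : ℕ, N ≤ n → 0 < n → ∀ i : ℕ, i ≤ n → ∀ x : ℝ,
      |linScheme c (T / n) g (n - i) x - vlin c T g (i * (T / n)) x|
        ≤ C * Real.sqrt (T / n) := by
  obtain ⟨C, hC⟩ := linear_case_rate_of_convergence_general T c hT hc.le g hg.continuous hgbdd hodd
  exact ⟨|C| * √T, 0, fun n _ hn i hi x => (hC n hn i hi x).trans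
    (mul_le_abs_mul_sqrt_mul_sqrt C (by positivity) (div_le_self hT.le (by exact_mod_cast hn)))⟩

end
end

section
/- Fix n ≥ 1 and work with real n×n matrices indexed by {1,…,n}. Let A be the upper bidiagonal matrix with A_{ii} = 1 for all i, A_{i,i+1} = −1 for i < n, and all other entries 0; and let B be the shift matrix with B_{i,i+1} = 1 for i < n and all other entries 0. Then A is invertible with (A⁻¹)_{ij} = 1 if j ≥ i and 0 otherwise, and for every k ≥ 1 the k-th power of A⁻¹B is given entrywise by ((A⁻¹B)^k)_{ij} = binomial(j − i − 1, k − 1) if j ≥ i + k and 0 otherwise. -/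
/-!
Upper triangular Toeplitz matrices multiply like power series: sending `∑ aₘ Xᵐ` to the matrix with
`aₘ` on its `m`-th superdiagonal is a ring homomorphism. It maps `1 - X` to `A` and `X` to `B`, so
`A⁻¹` is the image of `1 / (1 - X) = ∑ Xᵐ`, and `(A⁻¹ B) ^ k` is the image of `(X / (1 - X)) ^ k`,
whose coefficients are binomial by the negative binomial series.
-/

open Matrix

open PowerSeries

section Toeplitz

open Finset.HasAntidiagonal (antidiagonal mem_antidiagonal)

variable {R : Type*} [Semiring R] {n : ℕ}

lemma sum_Icc_coeff_mul_coeff (f g : R⟦X⟧) {i j : Fin n} (hij : i ≤ j) :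
    ∑ l ∈ Finset.Icc i j, coeff (l - i : ℕ) f * coeff (j - l : ℕ) g =
      coeff (j - i : ℕ) (f * g) := by
  rw [coeff_mul]
  refine Finset.sum_bij' (t := antidiagonal (j - i : ℕ))
    (fun (l : Fin n) _ => ((l : ℕ) - (i : ℕ), (j : ℕ) - (l : ℕ)))
    (fun p hp => ⟨i + p.1, by have := mem_antidiagonal.1 hp; omega⟩) ?_ ?_ ?_ ?_ ?_ <;>
    simp only [Finset.mem_Icc, mem_antidiagonal, Fin.le_def, Fin.ext_iff, Prod.forall,
      Prod.mk.injEq, implies_true] <;>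
    omega

variable (n) in
/-- The upper triangular Toeplitz matrix of a power series, with the coefficient of `X ^ m` on the
`m`-th superdiagonal, as a ring homomorphism: it turns inverses and powers of such matrices into
those of power series. -/
noncomputable def upperToeplitz : R⟦X⟧ →+* Matrix (Fin n) (Fin n) R where
  toFun f := of fun i j => if i ≤ j then coeff (j - i : ℕ) f else 0
  map_zero' := by
    ext i j
    simp
  map_one' := by
    ext i j
    simp only [of_apply, coeff_one, one_apply]
    grind
  map_add' f g := by
    ext i j
    simp only [of_apply, Matrix.add_apply, map_add, ite_add_zero]
  map_mul' f g := by
    ext i j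
    simp only [of_apply, mul_apply, ite_zero_mul_ite_zero, ← Finset.sum_filter, ← Finset.mem_Icc,
      Finset.filter_univ_mem]
    split_ifs with hij
    · exact (sum_Icc_coeff_mul_coeff f g hij).symm
    · rw [Finset.Icc_eq_empty hij, Finset.sum_empty]

lemma upperToeplitz_apply (f : R⟦X⟧) (i j : Fin n) :
    upperToeplitz n f i j = if i ≤ j then coeff (j - i : ℕ) f else 0 :=
  rfl

lemma upperToeplitz_X :
    upperToeplitz n (X : R⟦X⟧) = of fun i j : Fin n => if (j : ℕ) = i + 1 then 1 else 0 := by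
  ext i j
  simp only [upperToeplitz_apply, coeff_X, of_apply, Fin.le_def]
  grind

end Toeplitz

lemma upperToeplitz_one_sub_X {R : Type*} [Ring R] {n : ℕ} :
    upperToeplitz n (1 - X : R⟦X⟧) =
      of fun i j : Fin n => if i = j then 1 else if (j : ℕ) = i + 1 then -1 else 0 := by
  ext i j
  rw [map_sub, map_one, upperToeplitz_X]
  simp only [Matrix.sub_apply, one_apply, of_apply]
  grind

lemma coeff_X_mul_mk_one_pow {R : Type*} [CommRing R] {k : ℕ} (hk : 1 ≤ k) (m : ℕ) :
    coeff m ((X * mk 1 : R⟦X⟧) ^ k) = if k ≤ m then ((m - 1).choose (k - 1) : R) else 0 := by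
  obtain ⟨k, rfl⟩ := Nat.exists_eq_add_of_le' hk
  rw [mul_pow, coeff_X_pow_mul', mk_one_pow_eq_mk_choose_add, coeff_mk]
  split_ifs with hm
  · congr 2
    omega
  · rfl

theorem bidiagonal_inverse_and_shift_powers_general {R : Type*} [CommRing R] (n : ℕ)
    (A B : Matrix (Fin n) (Fin n) R)
    (hA : A = Matrix.of fun i j : Fin n =>
      if i = j then (1 : R) else if (j : ℕ) = (i : ℕ) + 1 then -1 else 0)
    (hB : B = Matrix.of fun i j : Fin n =>
      if (j : ℕ) = (i : ℕ) + 1 then (1 : R) else 0) :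
    IsUnit A
    ∧ A⁻¹ = Matrix.of (fun i j : Fin n => if (i : ℕ) ≤ (j : ℕ) then (1 : R) else 0)
    ∧ ∀ k : ℕ, 1 ≤ k →
        (A⁻¹ * B) ^ k = Matrix.of fun i j : Fin n =>
          if (i : ℕ) + k ≤ (j : ℕ)
            then (((j : ℕ) - (i : ℕ) - 1).choose (k - 1) : R)
            else 0 := by
  rw [← upperToeplitz_one_sub_X] at hA
  rw [← upperToeplitz_X] at hB
  have hmul : A * upperToeplitz n (mk 1) = 1 := by
    rw [hA, ← map_mul, mul_comm, mk_one_mul_one_sub_eq_one, map_one]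
  have hinv : A⁻¹ = upperToeplitz n (mk 1) := inv_eq_right_inv hmul
  refine ⟨.of_mul_eq_one _ hmul, ?_, fun k hk => ?_⟩
  · ext i j
    simp only [hinv, upperToeplitz_apply, coeff_mk, Pi.one_apply, of_apply, Fin.le_def]
  · ext i j
    rw [hinv, hB, ← map_mul, ← map_pow, mul_comm, upperToeplitz_apply, coeff_X_mul_mk_one_pow hk,
      ← ite_and, of_apply]
    exact if_congr (by grind) rfl rfl

/-- The explicit inverse of the bidiagonal matrix `A` and the entrywise formula for the
powers of `A⁻¹B`, where `A` has `1` on the diagonal, `−1` on the superdiagonal, and `B`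
is the superdiagonal shift matrix:
`(A⁻¹)_{ij} = 1_{j ≥ i}` and `((A⁻¹B)^k)_{ij} = C(j−i−1, k−1) 1_{j ≥ i+k}` for `k ≥ 1`. -/
theorem bidiagonal_inverse_and_shift_powers (n : ℕ) (hn : 1 ≤ n)
    (A B : Matrix (Fin n) (Fin n) ℝ)
    (hA : A = Matrix.of fun i j : Fin n =>
      if i = j then (1 : ℝ) else if (j : ℕ) = (i : ℕ) + 1 then -1 else 0)
    (hB : B = Matrix.of fun i j : Fin n =>
      if (j : ℕ) = (i : ℕ) + 1 then (1 : ℝ) else 0) :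
    IsUnit A
    ∧ A⁻¹ = Matrix.of (fun i j : Fin n => if (i : ℕ) ≤ (j : ℕ) then (1 : ℝ) else 0)
    ∧ ∀ k : ℕ, 1 ≤ k →
        (A⁻¹ * B) ^ k = Matrix.of fun i j : Fin n =>
          if (i : ℕ) + k ≤ (j : ℕ)
            then (((j : ℕ) - (i : ℕ) - 1).choose (k - 1) : ℝ)
            else 0 :=
  bidiagonal_inverse_and_shift_powers_general n A B hA hB
end
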